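/- arXiv:math/0610832 — 4 statements merged into one kernel-verified Lean document; each statement's English description precedes it below -/
import Mathlib

section
/- If an idempotent magma M satisfies the identity (x*y)*(u*v) = (u*x) * s(y,v) for all x,y,u,v in M, for some binary term s, then M is medial. -/
/-- Evaluation of a binary term (an element of the free magma on two
generators) in a magma `M` under the assignment `0 ↦ a`, `1 ↦ b`. -/
def evalBin {M : Type*} [Mul M] (t : FreeMagma (Fin 2)) (a b : M) : M :=
  FreeMagma.lift ![a, b] t

/-!
Write `x ~ y` when `x * z = y * z` for all `z`. Equating `y` and `v` in the hypothesis gives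
`(x * y) * (u * y) = (u * x) * y`, so `~` is a congruence, and `x * y` always commutes with `y`.
Put `p = x * y` and `q = y * x`. Then `x * q = p * x` and `y * q ~ p * y`, so
`p * q = (y * q) * (x * q) ~ (p * y) * (p * x) = p * s(y, x) = (y * y) * (x * x) = q`, and by
symmetry `q * p ~ p`. For `a = p * z` and `b = q * z` this says `b * a = b` and `a * b = a`; since
`a * b` commutes with `b`, it follows that `a = b`, that is, `p ~ q`. Now
`x * s(y, v) = (x * y) * (x * v) = (y * x) * (x * v) = (x * y) * s(x, v) = (y * x) * s(x, v)`,
which is `x * (y * v)`, so `(x * y) * (u * v) = (u * x) * (y * v) = (x * u) * (y * v)`.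
-/

/-- The identity `(x * z) * (y * z) = (y * x) * z` in a magma: right distributivity with the two
left factors exchanged. -/
def RightAntidistributive (M : Type*) [Mul M] : Prop :=
  ∀ x y z : M, (x * z) * (y * z) = (y * x) * z

/-- The generalized entropic identity `(x * y) * (u * v) = (u * x) * f y v`, for an arbitrary
binary operation `f` in place of a term operation. -/
def GeneralizedEntropic {M : Type*} [Mul M] (f : M → M → M) : Prop :=
  ∀ x y u v : M, (x * y) * (u * v) = (u * x) * f y v

section

variable {M : Type*} [Mul M]

namespace RightAntidistributive

theorem mul_comm_mul_iff_commute (hM : RightAntidistributive M) (x y z : M) :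
    (x * y) * z = (y * x) * z ↔ Commute (x * z) (y * z) := by
  rw [Commute, SemiconjBy, hM x y z, hM y x z, eq_comm]

theorem mul_comm_mul_right (hM : RightAntidistributive M) (hidem : ∀ x : M, x * x = x) (x y : M) :
    (x * y) * y = (y * x) * y := by
  simpa only [hidem] using hM x y y

theorem commute_mul_right (hM : RightAntidistributive M) (hidem : ∀ x : M, x * x = x) (x y : M) :
    Commute (x * y) y := by
  simpa only [Commute, SemiconjBy, hidem] using (hM y x y).symm

theorem mul_mul_left_mul (hM : RightAntidistributive M) (hidem : ∀ x : M, x * x = x) (x y z : M) :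
    (x * (x * y)) * z = ((x * y) * x) * z := by
  rw [hM.mul_comm_mul_iff_commute, ← hM y x z]
  exact (hM.commute_mul_right hidem (y * z) (x * z)).symm

theorem mul_eq_mul_of_mul_mul_eq (hM : RightAntidistributive M) (hidem : ∀ x : M, x * x = x)
    {x y z : M} (hxy : (x * y) * z = y * z) (hyx : (y * x) * z = x * z) : x * z = y * z := by
  have hleft : (x * z) * (y * z) = x * z := (hM x y z).trans hyx
  have hright : (y * z) * (x * z) = y * z := (hM y x z).trans hxy
  have hcomm : Commute (x * z) (y * z) := by
    simpa only [hleft] using hM.commute_mul_right hidem (x * z) (y * z)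
  calc
    x * z = (x * z) * (y * z) := hleft.symm
    _ = (y * z) * (x * z) := hcomm
    _ = y * z := hright

end RightAntidistributive

namespace GeneralizedEntropic

variable {f : M → M → M}

theorem mul_mul_mul_left (h : GeneralizedEntropic f) (hidem : ∀ x : M, x * x = x) (x y z : M) :
    (x * y) * (x * z) = x * f y z := by
  simpa only [hidem] using h x y x z

theorem mul_mul_eq (h : GeneralizedEntropic f) (hidem : ∀ x : M, x * x = x) (x y z : M) :
    x * (y * z) = (y * x) * f x z := by
  simpa only [hidem] using h x x y z

theorem rightAntidistributive (h : GeneralizedEntropic f) (hidem : ∀ x : M, x * x = x) :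
    RightAntidistributive M := fun x y z ↦ by
  have hf : (y * x) * f z z = (y * x) * z := by
    rw [← h.mul_mul_mul_left hidem, hidem]
  rw [h, hf]

theorem mul_mul_mul_swap_mul (h : GeneralizedEntropic f) (hidem : ∀ x : M, x * x = x)
    (x y z : M) : ((x * y) * (y * x)) * z = (y * x) * z := by
  have hM := h.rightAntidistributive hidem
  have hx : x * (y * x) = (x * y) * x := by
    rw [← hM.commute_mul_right hidem y x, hM.mul_comm_mul_right hidem]
  have hy : (y * (y * x)) * z = ((x * y) * y) * z := by
    rw [hM.mul_mul_left_mul hidem, hM.mul_comm_mul_right hidem]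
  have hyx : ((x * y) * y) * ((x * y) * x) = y * x := by
    rw [h.mul_mul_mul_left hidem, ← h.mul_mul_eq hidem, hidem]
  calc
    ((x * y) * (y * x)) * z = ((y * (y * x)) * (x * (y * x))) * z := by rw [hM y x]
    _ = ((x * (y * x)) * z) * ((y * (y * x)) * z) := (hM _ _ _).symm
    _ = (((x * y) * x) * z) * (((x * y) * y) * z) := by rw [hx, hy]
    _ = (((x * y) * y) * ((x * y) * x)) * z := hM _ _ _
    _ = (y * x) * z := by rw [hyx]

theorem mul_comm_mul (h : GeneralizedEntropic f) (hidem : ∀ x : M, x * x = x) (x y z : M) :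
    (x * y) * z = (y * x) * z :=
  (h.rightAntidistributive hidem).mul_eq_mul_of_mul_mul_eq hidem
    (h.mul_mul_mul_swap_mul hidem x y z) (h.mul_mul_mul_swap_mul hidem y x z)

theorem mul_apply_eq_mul_mul (h : GeneralizedEntropic f) (hidem : ∀ x : M, x * x = x)
    (x y z : M) : x * f y z = x * (y * z) := calc
  x * f y z = (x * y) * (x * z) := (h.mul_mul_mul_left hidem x y z).symm
  _ = (y * x) * (x * z) := h.mul_comm_mul hidem x y _
  _ = (x * y) * f x z := h y x x z
  _ = (y * x) * f x z := h.mul_comm_mul hidem x y _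
  _ = x * (y * z) := (h.mul_mul_eq hidem x y z).symm

end GeneralizedEntropic

theorem stmt_4_general {f : M → M → M} (hidem : ∀ x : M, x * x = x) (h : GeneralizedEntropic f)
    (x y u v : M) : (x * y) * (u * v) = (x * u) * (y * v) := calc
  (x * y) * (u * v) = (u * x) * f y v := h x y u v
  _ = (u * x) * (y * v) := h.mul_apply_eq_mul_mul hidem (u * x) y v
  _ = (x * u) * (y * v) := h.mul_comm_mul hidem u x (y * v)

end

/-- An idempotent magma satisfying this instance of the generalized entropic
property is medial. -/
theorem stmt_4 {M : Type*} [Mul M] (hidem : ∀ x : M, x * x = x)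
    (s : FreeMagma (Fin 2))
    (h : ∀ x y u v : M, (x * y) * (u * v) = (u * x) * evalBin s y v) :
    ∀ x y u v : M, (x * y) * (u * v) = (x * u) * (y * v) :=
  stmt_4_general (f := evalBin s) hidem h
end

section
/- Let M be an idempotent magma satisfying the generalized entropic property. If M has a one-sided unit, i.e., there is an element e with e*x = x for all x in M, or with x*e = x for all x in M, then M is medial. -/
/-- A magma satisfies the generalized entropic property if there are binary
terms `t`, `s` with `(x*y)*(u*v) = t(x,u)*s(y,v)`. -/
def GEP (M : Type*) [Mul M] : Prop :=
  ∃ t s : FreeMagma (Fin 2),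
    ∀ x y u v : M, (x * y) * (u * v) = evalBin t x u * evalBin s y v

/-!
Let `e` be a left unit. Then `t(e,e) = e`, so the instance `x = u = e` of the generalized entropic
identity reads `y * v = s(y,v)`: the second term is the multiplication. The instances `x = e` and
`u = e` now give `y * (u * v) = u * (y * v)` and `(x * y) * v = (x * e) * (y * v)`. Together they
put both sides of the medial law in the form `(x * e) * (y * (u * v))`. A right unit of `M` is a
left unit of the opposite magma.
-/

/-- A magma is medial (entropic) if `(x * y) * (u * v) = (x * u) * (y * v)` holds in it. -/
def IsMedial (M : Type*) [Mul M] : Prop :=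
  ∀ x y u v : M, (x * y) * (u * v) = (x * u) * (y * v)

/-- The generalized entropic identity `(x * y) * (u * v) = t(x,u) * s(y,v)`. Here `t` and `s` are
arbitrary binary operations rather than terms, so that the identity passes to the opposite magma
without mirroring terms. -/
def GenEntropic {M : Type*} [Mul M] (t s : M → M → M) : Prop :=
  ∀ x y u v : M, (x * y) * (u * v) = t x u * s y v

section

variable {M : Type*} [Mul M]

theorem lift_const_of_isIdempotentElem {α : Type*} {a : M} (ha : IsIdempotentElem a)
    (t : FreeMagma α) : FreeMagma.lift (fun _ ↦ a) t = a := by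
  induction t with
  | ih1 i => rfl
  | ih2 p q hp hq => rw [map_mul, hp, hq, ha.eq]

theorem evalBin_self_of_isIdempotentElem {a : M} (ha : IsIdempotentElem a)
    (t : FreeMagma (Fin 2)) : evalBin t a a = a := by
  have assignment_eq : ![a, a] = fun _ ↦ a := by
    ext i
    fin_cases i <;> rfl
  rw [evalBin, assignment_eq, lift_const_of_isIdempotentElem ha]

theorem IsMedial.of_mulOpposite (h : IsMedial Mᵐᵒᵖ) : IsMedial M := fun x y u v ↦
  MulOpposite.op_injective (h (.op v) (.op u) (.op y) (.op x))

namespace GenEntropic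

variable {t s : M → M → M} {e : M}

theorem mulOpposite (h : GenEntropic t s) :
    GenEntropic (fun x u : Mᵐᵒᵖ ↦ .op (s u.unop x.unop)) (fun y v ↦ .op (t v.unop y.unop)) :=
  fun x y u v ↦ MulOpposite.unop_injective (h v.unop u.unop y.unop x.unop)

theorem right_eq_mul (h : GenEntropic t s) (he : ∀ x, e * x = x) (hte : t e e = e) :
    s = (· * ·) := by
  funext y v
  simpa only [hte, he] using (h e y e v).symm

theorem mul_left_comm_of_left_unit (h : GenEntropic t (· * ·)) (he : ∀ x, e * x = x) (y u v : M) :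
    y * (u * v) = u * (y * v) := by
  have t_unit_mul (w : M) : t e u * w = u * w := by
    simpa only [he] using (h e e u w).symm
  calc
    y * (u * v) = (e * y) * (u * v) := by rw [he]
    _ = t e u * (y * v) := h e y u v
    _ = u * (y * v) := t_unit_mul _

theorem mul_mul_eq_of_left_unit (h : GenEntropic t (· * ·)) (he : ∀ x, e * x = x) (x y v : M) :
    (x * y) * v = (x * e) * (y * v) := by
  have t_mul_unit (w : M) : t x e * w = (x * e) * w := by
    simpa only [he] using (h x e e w).symm
  calc
    (x * y) * v = (x * y) * (e * v) := by rw [he]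
    _ = t x e * (y * v) := h x y e v
    _ = (x * e) * (y * v) := t_mul_unit _

theorem isMedial_of_left_unit (h : GenEntropic t s) (he : ∀ x, e * x = x) (hte : t e e = e) :
    IsMedial M := by
  obtain rfl := h.right_eq_mul he hte
  intro x y u v
  calc
    (x * y) * (u * v) = (x * e) * (y * (u * v)) := h.mul_mul_eq_of_left_unit he x y _
    _ = (x * e) * (u * (y * v)) := by rw [h.mul_left_comm_of_left_unit he y u v]
    _ = (x * u) * (y * v) := (h.mul_mul_eq_of_left_unit he x u _).symm

theorem isMedial_of_right_unit (h : GenEntropic t s) (he : ∀ x, x * e = x) (hse : s e e = e) :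
    IsMedial M :=
  .of_mulOpposite <| h.mulOpposite.isMedial_of_left_unit (e := .op e)
    (fun x ↦ MulOpposite.unop_injective (he x.unop)) (congrArg MulOpposite.op hse)

end GenEntropic

theorem stmt_6_general (hGEP : GEP M)
    (hunit : (∃ e : M, ∀ x : M, e * x = x) ∨ (∃ e : M, ∀ x : M, x * e = x)) :
    IsMedial M := by
  obtain ⟨t, s, h : GenEntropic (evalBin t) (evalBin s)⟩ := hGEP
  rcases hunit with ⟨e, he⟩ | ⟨e, he⟩
  · exact h.isMedial_of_left_unit he (evalBin_self_of_isIdempotentElem (he e) t)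
  · exact h.isMedial_of_right_unit he (evalBin_self_of_isIdempotentElem (he e) s)

end

/-- An idempotent magma with a one-sided unit satisfying the generalized
entropic property is medial. -/
theorem stmt_6 {M : Type*} [Mul M] (hidem : ∀ x : M, x * x = x)
    (hGEP : GEP M)
    (hunit : (∃ e : M, ∀ x : M, e * x = x) ∨ (∃ e : M, ∀ x : M, x * e = x)) :
    ∀ x y u v : M, (x * y) * (u * v) = (x * u) * (y * v) :=
  stmt_6_general hGEP hunit
end

section
/- Every idempotent commutative magma satisfying the generalized entropic property is medial. -/
/-! In an idempotent commutative magma an element is determined by its multiplication operator.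
Suppose `(x * y) * (u * v) = f x u * g y v` with `g` idempotent. Then `f x u` has the operator
`y ↦ (x * y) * (u * y)`; for `u = x` this is the operator of `x`, so `f` is idempotent too. By
symmetry `g x u` has the same operator as `f x u`, so `f = g`, and therefore
`f x u = f x u * g x u = (x * x) * (u * u) = x * u`. -/

section

variable {M : Type*} [Mul M]

theorem evalBin_self (hidem : ∀ x : M, x * x = x) (t : FreeMagma (Fin 2)) (a : M) :
    evalBin t a a = a := by
  unfold evalBin
  induction t with
  | ih1 i => fin_cases i <;> rfl
  | ih2 p q hp hq => rw [map_mul, hp, hq, hidem]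

theorem eq_of_forall_mul_right_eq (hidem : ∀ x : M, x * x = x)
    (hcomm : ∀ x y : M, x * y = y * x) {a b : M} (h : ∀ y, a * y = b * y) : a = b :=
  calc
    a = a * a := (hidem a).symm
    _ = b * a := h a
    _ = a * b := hcomm b a
    _ = b * b := h b
    _ = b := hidem b

/-- The entropic identity for a pair of binary operations, which need not be term operations;
`GEP M` asks for an entropic pair of term operations. -/
def EntropicPair (f g : M → M → M) : Prop :=
  ∀ x y u v : M, (x * y) * (u * v) = f x u * g y v

namespace EntropicPair

variable {f g : M → M → M}

theorem left_mul (h : EntropicPair f g) (hg : ∀ x, g x x = x) (x u y : M) :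
    f x u * y = (x * y) * (u * y) := by
  rw [h, hg]

theorem mul_right (h : EntropicPair f g) (hf : ∀ x, f x x = x) (y x u : M) :
    y * g x u = (y * x) * (y * u) := by
  rw [h, hf]

theorem left_mul_right (h : EntropicPair f g) (hidem : ∀ x : M, x * x = x) (x u : M) :
    f x u * g x u = x * u := by
  rw [← h, hidem, hidem]

theorem left_self (h : EntropicPair f g) (hidem : ∀ x : M, x * x = x)
    (hcomm : ∀ x y : M, x * y = y * x) (hg : ∀ x, g x x = x) (x : M) : f x x = x :=
  eq_of_forall_mul_right_eq hidem hcomm fun y => by rw [h.left_mul hg, hidem]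

theorem left_eq_right (h : EntropicPair f g) (hidem : ∀ x : M, x * x = x)
    (hcomm : ∀ x y : M, x * y = y * x) (hg : ∀ x, g x x = x) (x u : M) : f x u = g x u :=
  eq_of_forall_mul_right_eq hidem hcomm fun y =>
    calc
      f x u * y = (x * y) * (u * y) := h.left_mul hg x u y
      _ = (y * x) * (y * u) := by rw [hcomm x y, hcomm u y]
      _ = y * g x u := (h.mul_right (h.left_self hidem hcomm hg) y x u).symm
      _ = g x u * y := hcomm _ _

theorem left_eq_mul (h : EntropicPair f g) (hidem : ∀ x : M, x * x = x)
    (hcomm : ∀ x y : M, x * y = y * x) (hg : ∀ x, g x x = x) (x u : M) : f x u = x * u := by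
  rw [← h.left_mul_right hidem, ← h.left_eq_right hidem hcomm hg, hidem]

end EntropicPair

theorem stmt_9_general {f g : M → M → M} (hidem : ∀ x : M, x * x = x)
    (hcomm : ∀ x y : M, x * y = y * x) (h : EntropicPair f g) (hg : ∀ x, g x x = x)
    (x y u v : M) : (x * y) * (u * v) = (x * u) * (y * v) := by
  have f_eq_mul := h.left_eq_mul hidem hcomm hg
  rw [h, ← h.left_eq_right hidem hcomm hg, f_eq_mul, f_eq_mul]

end

/-- An idempotent commutative magma satisfying the generalized entropic
property is medial. -/
theorem stmt_9 {M : Type*} [Mul M]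
    (hidem : ∀ x : M, x * x = x)
    (hcomm : ∀ x y : M, x * y = y * x)
    (hGEP : GEP M) :
    ∀ x y u v : M, (x * y) * (u * v) = (x * u) * (y * v) := by
  obtain ⟨t, s, h⟩ := hGEP
  exact stmt_9_general hidem hcomm h (evalBin_self hidem s)
end

section
/- The magma G1 does not satisfy the generalized entropic property: there are no binary terms t, s such that (x*y)*(u*v) = t(x,u)*s(y,v) holds for all x,y,u,v in G1. -/
/-- The three-element groupoid `G1` from the paper, on `{a,b,c}` encoded as
`{0,1,2}`: a*a=a, a*b=c, a*c=c, b*a=c, b*b=b, b*c=c, c*a=a, c*b=b, c*c=c. -/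
def G1 : Type := Fin 3

def g1mul : Fin 3 → Fin 3 → Fin 3 := ![![0, 2, 2], ![2, 1, 2], ![0, 1, 2]]

instance : Mul G1 := ⟨g1mul⟩

/-!
Let binary operations `f`, `g` on `G1` satisfy `(x * y) * (u * v) = f x u * g y v`. Since `c` is a
left identity, setting `x = u = c` gives `y * v = f c c * g y v`, so left multiplication by `f c c`
is onto, and this forces `f c c = c`. Hence `g y v = y * v`. As `c` is also a right zero,
`y * v = c` now entails `(x * y) * (u * v) = f x u * c = c` for all `x` and `u`. But `b * a = c`,
while `(a * b) * (c * a) = a`.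
-/

/-- The generalized entropic identity for a pair of binary operations `f`, `g` on a magma. The
operations are arbitrary functions, of which pairs of binary terms are a special case. -/
def IsEntropicPair {M : Type*} [Mul M] (f g : M → M → M) : Prop :=
  ∀ x y u v : M, (x * y) * (u * v) = f x u * g y v

namespace IsEntropicPair

variable {M : Type*} [Mul M] {f g : M → M → M} {e : M}

theorem mul_eq_of_left_identity (h : IsEntropicPair f g) (he : ∀ x, e * x = x) (y v : M) :
    y * v = f e e * g y v := by
  simpa only [he] using h e y e v

theorem surjective_mul_left (h : IsEntropicPair f g) (he : ∀ x, e * x = x) :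
    Function.Surjective (f e e * ·) := fun y =>
  ⟨g e y, by simp only [← h.mul_eq_of_left_identity he, he]⟩

theorem mul_mul_mul_eq_of_mul_eq (h : IsEntropicPair f g) (he : ∀ x, e * x = x)
    (hzero : ∀ x, x * e = e) (hf : f e e = e) {y v : M} (hyv : y * v = e) (x u : M) :
    (x * y) * (u * v) = e := by
  have hg : g y v = e := by
    rw [← hyv, h.mul_eq_of_left_identity he, hf, he]
  rw [h, hg, hzero]

end IsEntropicPair

namespace G1

instance : Fintype G1 := inferInstanceAs (Fintype (Fin 3))

instance : DecidableEq G1 := inferInstanceAs (DecidableEq (Fin 3))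

/-- The element `a` of `G1`, encoded as `0`. -/
def a : G1 := (0 : Fin 3)

/-- The element `b` of `G1`, encoded as `1`. -/
def b : G1 := (1 : Fin 3)

/-- The element `c` of `G1`, encoded as `2`. -/
def c : G1 := (2 : Fin 3)

theorem c_mul : ∀ x : G1, c * x = x := by decide

theorem mul_c : ∀ x : G1, x * c = c := by decide

theorem eq_c_of_surjective_mul_left : ∀ {p : G1}, Function.Surjective (p * ·) → p = c := by
  unfold Function.Surjective
  decide

end G1

open G1 in
theorem stmt_16_general : ¬ ∃ f g : G1 → G1 → G1,
    ∀ x y u v : G1, (x * y) * (u * v) = f x u * g y v := by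
  rintro ⟨f, g, h : IsEntropicPair f g⟩
  have hf : f c c = c := eq_c_of_surjective_mul_left (h.surjective_mul_left c_mul)
  have hba : b * a = c := by decide
  have hc : (a * b) * (c * a) = c := h.mul_mul_mul_eq_of_mul_eq c_mul mul_c hf hba a c
  have ha : (a * b) * (c * a) = a := by decide
  exact absurd (ha.symm.trans hc) (by decide)

/-- `G1` does not satisfy the generalized entropic property. -/
theorem stmt_16 : ¬ ∃ t s : FreeMagma (Fin 2),
    ∀ x y u v : G1, (x * y) * (u * v) = evalBin t x u * evalBin s y v := by
  rintro ⟨t, s, h⟩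
  exact stmt_16_general ⟨evalBin t, evalBin s, h⟩
end
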